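/- arXiv:2507.19139 — 8 statements merged into one kernel-verified Lean document; each statement's English description precedes it below -/
import Mathlib

section
/- For any two matching strings s1 and s2 of length n over an alphabet Σ, there is exactly one valid swap permutation transforming s1 into s2; consequently the swap permutation π(s1,s2) and the swap string h_{s1,s2} are well-defined (unique). -/
/-!
Strings of length `n` over an alphabet `α` are modelled as functions `ℕ → α`,
where only the values at positions `0, …, n-1` (0-indexed) are relevant.
A swap at (0-indexed) position `p` exchanges the letters at positions `p` and `p+1`.
A swap permutation is modelled as a `Finset ℕ` of swap positions, pairwise at
distance ≥ 2 (equivalently: containing no two consecutive positions).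
-/

universe u

variable {α : Type u}

/-- `P` is a swap permutation for strings of length `n`: every swap position is in range
and no two swaps overlap (positions are pairwise at distance ≥ 2). -/
def IsSwapSet (n : ℕ) (P : Finset ℕ) : Prop :=
  (∀ p ∈ P, p + 1 < n) ∧ (∀ p ∈ P, p + 1 ∉ P)

/-- Apply a set of pairwise disjoint swaps to a string. -/
def applySwaps (P : Finset ℕ) (s : ℕ → α) : ℕ → α := fun i =>
  if i ∈ P then s (i + 1)
  else if 0 < i ∧ i - 1 ∈ P then s (i - 1)
  else s i

/-- The swap permutation `P` transforms `s1` into `s2` (as length-`n` strings). -/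
def Transforms (n : ℕ) (P : Finset ℕ) (s1 s2 : ℕ → α) : Prop :=
  IsSwapSet n P ∧ ∀ i < n, applySwaps P s1 i = s2 i

/-- Two length-`n` strings are matching if some swap permutation transforms one
into the other. -/
def SwMatching (n : ℕ) (s1 s2 : ℕ → α) : Prop :=
  ∃ P : Finset ℕ, Transforms n P s1 s2

/-- `P` is a *valid* swap permutation transforming `s1` into `s2`:
it transforms `s1` into `s2` and never swaps two identical letters. -/
def ValidTransform (n : ℕ) (P : Finset ℕ) (s1 s2 : ℕ → α) : Prop :=
  Transforms n P s1 s2 ∧ ∀ p ∈ P, s1 p ≠ s1 (p + 1)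

/-- Hamming distance of two length-`n` strings. -/
noncomputable def hamDist {β : Type*} (n : ℕ) (s t : ℕ → β) : ℕ :=
  letI : DecidablePred (fun i => s i ≠ t i) := fun _ => Classical.propDecidable _
  ((Finset.range n).filter (fun i => s i ≠ t i)).card

/-- Swap distance: the number of swaps of the valid swap permutation transforming
`s1` into `s2` (unique when it exists), and `⊤` if the strings are not matching. -/
noncomputable def swapDist (n : ℕ) (s1 s2 : ℕ → α) : ℕ∞ :=
  sInf {m : ℕ∞ | ∃ P : Finset ℕ, ValidTransform n P s1 s2 ∧ m = (P.card : ℕ∞)}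

/-- Swap+Hamming distance: minimum over all length-`n` strings `t` of
`∂S(s1,t) + ∂Ham(t,s2)`. -/
noncomputable def shDist (n : ℕ) (s1 s2 : ℕ → α) : ℕ∞ :=
  ⨅ t : ℕ → α, swapDist n s1 t + (hamDist n t s2 : ℕ∞)

/-- Number of occurrences of the letter `x` at positions `a ≤ i < b` of the string `s`. -/
noncomputable def countIn {β : Type*} (s : ℕ → β) (a b : ℕ) (x : β) : ℕ :=
  letI : DecidablePred (fun i => s i = x) := fun _ => Classical.propDecidable _
  ((Finset.Ico a b).filter (fun i => s i = x)).card

/-- Greedy (left-to-right) swap set between two strings: position `p` is greedily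
swapped iff `s1[p] = s2[p+1]`, `s1[p+1] = s2[p]`, `s1[p] ≠ s1[p+1]`, and position
`p-1` was not swapped. -/
def greedyMem (s1 s2 : ℕ → α) : ℕ → Prop
  | 0 => s1 0 = s2 1 ∧ s1 1 = s2 0 ∧ s1 0 ≠ s1 1
  | p + 1 => (s1 (p + 1) = s2 (p + 2) ∧ s1 (p + 2) = s2 (p + 1) ∧ s1 (p + 1) ≠ s1 (p + 2))
      ∧ ¬ greedyMem s1 s2 p

/-- The greedy swap set `G(s1,s2)` restricted to the valid positions `0, …, n-2`. -/
noncomputable def greedySet (n : ℕ) (s1 s2 : ℕ → α) : Finset ℕ :=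
  letI : DecidablePred (greedyMem s1 s2) := fun _ => Classical.propDecidable _
  (Finset.range (n - 1)).filter (greedyMem s1 s2)

/-- `SW(S, t, i)`: the set of indices `j` such that `t` and `s j` have a greedy swap
at position `i`. -/
noncomputable def SW (n : ℕ) {k : ℕ} (s : Fin k → ℕ → α) (t : ℕ → α) (i : ℕ) :
    Finset (Fin k) :=
  letI : DecidablePred (fun j : Fin k => i ∈ greedySet n t (s j)) :=
    fun _ => Classical.propDecidable _
  Finset.univ.filter (fun j => i ∈ greedySet n t (s j))

/-- The swap `(p, p+1)` is necessary for the input string `s i` if every string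
matching all strings of `S` has a swap at position `p` in its valid swap
permutation towards `s i`. -/
def NecessarySwap (n : ℕ) {k : ℕ} (s : Fin k → ℕ → α) (i : Fin k) (p : ℕ) : Prop :=
  ∀ t : ℕ → α, (∀ j, SwMatching n t (s j)) →
    ∀ P : Finset ℕ, ValidTransform n P t (s i) → p ∈ P

/-- Lexicographic strict order on length-`n` strings. -/
def LexLt {β : Type*} [LinearOrder β] (n : ℕ) (s t : ℕ → β) : Prop :=
  ∃ i < n, s i < t i ∧ ∀ j < i, s j = t j

/-- Discarding the swaps of identical letters does not change the resulting string. -/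
theorem Transforms.validTransform_filter {n : ℕ} {P : Finset ℕ} {s1 s2 : ℕ → α}
    [DecidablePred fun p => s1 p ≠ s1 (p + 1)] (h : Transforms n P s1 s2) :
    ValidTransform n (P.filter fun p => s1 p ≠ s1 (p + 1)) s1 s2 := by
  obtain ⟨⟨hlt, hdisj⟩, heq⟩ := h
  refine ⟨⟨⟨fun p hp => hlt p (Finset.mem_filter.1 hp).1, fun p hp hp' =>
    hdisj p (Finset.mem_filter.1 hp).1 (Finset.mem_filter.1 hp').1⟩, fun i hi => ?_⟩,
    fun p hp => (Finset.mem_filter.1 hp).2⟩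
  rw [← heq i hi]
  simp only [applySwaps, Finset.mem_filter]
  rcases i with _ | i
  · grind
  · have := hdisj i
    simp only [Nat.add_sub_cancel]
    grind

/-- If two valid swap permutations with the same effect agree at all positions before `p`,
then a swap at `p` in one of them is also a swap in the other. -/
theorem ValidTransform.mem_of_agree_below {n : ℕ} {P Q : Finset ℕ} {s1 s2 : ℕ → α}
    (hP : ValidTransform n P s1 s2) (hQ : ValidTransform n Q s1 s2) {p : ℕ}
    (hbelow : ∀ q < p, q ∈ Q → q ∈ P) (hp : p ∈ P) : p ∈ Q := by
  by_contra hpQ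
  obtain ⟨⟨⟨hlt, hdisj⟩, heqP⟩, hne⟩ := hP
  have hpn : p < n := (Nat.lt_succ_self p).trans (hlt p hp)
  have hprev : ¬ (0 < p ∧ p - 1 ∈ Q) := fun ⟨hpos, hq⟩ =>
    hdisj (p - 1) (hbelow _ (by omega) hq) (by rwa [Nat.sub_add_cancel hpos])
  have hs := (heqP p hpn).trans (hQ.1.2 p hpn).symm
  simp only [applySwaps, if_pos hp, if_neg hpQ, if_neg hprev] at hs
  exact hne p hp hs.symm

theorem ValidTransform.unique {n : ℕ} {P Q : Finset ℕ} {s1 s2 : ℕ → α}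
    (hP : ValidTransform n P s1 s2) (hQ : ValidTransform n Q s1 s2) : P = Q := by
  ext p
  induction p using Nat.strong_induction_on with
  | _ p ih =>
    exact ⟨hP.mem_of_agree_below hQ fun q hq => (ih q hq).2,
      hQ.mem_of_agree_below hP fun q hq => (ih q hq).1⟩

/-- For any two matching strings `s1`, `s2` of length `n`, there is
exactly one valid swap permutation transforming `s1` into `s2`; hence `π(s1,s2)`
(and thus the swap string `h_{s1,s2}`) is well-defined. -/
theorem swap_permutation_unique {α : Type u} (n : ℕ) (s1 s2 : ℕ → α)
    (h : SwMatching n s1 s2) :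
    ∃! P : Finset ℕ, ValidTransform n P s1 s2 := by
  classical
  obtain ⟨P, hP⟩ := h
  exact ⟨_, hP.validTransform_filter, fun Q hQ => hQ.unique hP.validTransform_filter⟩
end

section
/- Let s1, s2, s3 be strings of length n over Σ such that s1 and s2 are matching and s2 and s3 are matching, and let h = h_{s1,s2} ⊕ h_{s2,s3} be the position-wise XOR of the two swap strings. If there is no position p with h[p] = h[p+1] = 1, then s1 and s3 are matching and h_{s1,s3} = h. -/
/-!
Strings of length `n` over an alphabet `α` are modelled as functions `ℕ → α`,
where only the values at positions `0, …, n-1` (0-indexed) are relevant.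
A swap at (0-indexed) position `p` exchanges the letters at positions `p` and `p+1`.
A swap permutation is modelled as a `Finset ℕ` of swap positions, pairwise at
distance ≥ 2 (equivalently: containing no two consecutive positions).
-/

universe u

variable {α : Type u}

/-- If the symmetric difference of two swap sets has no two consecutive elements, then
no element of one is followed by an element of the other. -/
theorem IsSwapSet.succ_notMem_of_symmDiff {n : ℕ} {P Q : Finset ℕ}
    (hP : IsSwapSet n P) (hQ : IsSwapSet n Q)
    (hno : ∀ p : ℕ, ¬ (p ∈ (P \ Q) ∪ (Q \ P) ∧ p + 1 ∈ (P \ Q) ∪ (Q \ P))) :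
    ∀ p ∈ P, p + 1 ∉ Q := by
  intro p hp hq
  have hp' := hP.2 p hp
  have hq' : p ∉ Q := fun h => hQ.2 p h hq
  exact hno p (by simp [hp, hq, hp', hq'])

/-- Let `s1,s2` be matching via the valid swap permutation `P` and
`s2,s3` matching via the valid swap permutation `Q`, and let `h = h_{s1,s2} ⊕ h_{s2,s3}`,
i.e. the indicator string of the symmetric difference `(P \ Q) ∪ (Q \ P)`. If `h` has no
two consecutive `1`s, then `s1` and `s3` are matching and `h_{s1,s3} = h`, i.e. the
symmetric difference is the valid swap permutation transforming `s1` into `s3`. -/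
theorem three_way_match_compatible {α : Type u} (n : ℕ) (s1 s2 s3 : ℕ → α)
    (P Q : Finset ℕ)
    (hP : ValidTransform n P s1 s2) (hQ : ValidTransform n Q s2 s3)
    (hno : ∀ p : ℕ, ¬ (p ∈ (P \ Q) ∪ (Q \ P) ∧ p + 1 ∈ (P \ Q) ∪ (Q \ P))) :
    SwMatching n s1 s3 ∧ ValidTransform n ((P \ Q) ∪ (Q \ P)) s1 s3 := by
  have hPQ := hP.1.1.succ_notMem_of_symmDiff hQ.1.1 hno
  have hQP := hQ.1.1.succ_notMem_of_symmDiff hP.1.1 (by simpa only [Finset.union_comm] using hno)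
  obtain ⟨⟨⟨hPn, hPP⟩, h12⟩, hPv⟩ := hP
  obtain ⟨⟨⟨hQn, hQQ⟩, h23⟩, hQv⟩ := hQ
  have hvalid : ValidTransform n ((P \ Q) ∪ (Q \ P)) s1 s3 := by
    refine ⟨⟨⟨?_, fun p hp hp' => hno p ⟨hp, hp'⟩⟩, fun i hi => ?_⟩, fun p hp => ?_⟩
    · grind
    · have e1 := h12 i hi
      have e2 := h23 i hi
      have e3 := h12 (i - 1) (by omega)
      have e4 : i ∈ Q → applySwaps P s1 (i + 1) = s2 (i + 1) := fun h => h12 _ (hQn i h)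
      rw [← e2]
      rcases i with _ | i
      · simp only [applySwaps] at *
        grind
      · simp only [applySwaps, Nat.add_sub_cancel, Nat.succ_pos, true_and] at *
        grind
    · rcases Finset.mem_union.1 hp with h | h
      · exact hPv p (Finset.mem_sdiff.1 h).1
      · obtain ⟨hq, hp'⟩ := Finset.mem_sdiff.1 h
        have hlt := hQn p hq
        have e1 := h12 p (by omega)
        have e2 := h12 (p + 1) hlt
        have hv := hQv p hq
        simp only [applySwaps] at e1 e2
        grind
  exact ⟨⟨_, hvalid.1⟩, hvalid⟩
end

section
/- Let s1, s2, s3 be strings of length n over Σ such that s1 and s2 are matching and s2 and s3 are matching, and let h = h_{s1,s2} ⊕ h_{s2,s3} be the position-wise XOR of the two swap strings. If h[p−1] = h[p] = 1 for some position p, then s1 and s3 are not matching, and every string t of length n that is matching with both s1 and s3 satisfies t[p−1] = s2[p−1], t[p] = s2[p], and t[p+1] = s2[p+1]. -/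
/-!
Strings of length `n` over an alphabet `α` are modelled as functions `ℕ → α`,
where only the values at positions `0, …, n-1` (0-indexed) are relevant.
A swap at (0-indexed) position `p` exchanges the letters at positions `p` and `p+1`.
A swap permutation is modelled as a `Finset ℕ` of swap positions, pairwise at
distance ≥ 2 (equivalently: containing no two consecutive positions).
-/

universe u

variable {α : Type u}

/-- A swap set changes the prefix sum of a letter weight only at the positions it swaps. -/
lemma Transforms.sum_range_succ {α : Type u} {n : ℕ} {P : Finset ℕ} {s t : ℕ → α}
    (h : Transforms n P s t) (f : α → ℤ) (k : ℕ) (hk : k < n) :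
    ∑ i ∈ Finset.range (k + 1), f (t i) =
      ∑ i ∈ Finset.range (k + 1), f (s i) + if k ∈ P then f (s (k + 1)) - f (s k) else 0 := by
  induction k with
  | zero =>
    have ht := h.2 0 hk
    by_cases h0 : 0 ∈ P <;> simp_all [applySwaps, ← ht]
  | succ k ih =>
    have ht := h.2 (k + 1) hk
    have hdisj := h.1.2 k
    rw [Finset.sum_range_succ, ih (by omega), Finset.sum_range_succ _ (k + 1), ← ht]
    by_cases h0 : k ∈ P
    · simp only [applySwaps, h0, hdisj h0, Nat.add_sub_cancel, Nat.succ_pos, and_self, if_true,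
        if_false]
      ring
    · by_cases h1 : k + 1 ∈ P <;> simp [applySwaps, h0, h1]

lemma Transforms.apply_of_mem {α : Type u} {n : ℕ} {P : Finset ℕ} {s t : ℕ → α}
    (h : Transforms n P s t) {k : ℕ} (hk : k ∈ P) :
    t k = s (k + 1) ∧ t (k + 1) = s k := by
  have hn := h.1.1 k hk
  rw [← h.2 k (by omega), ← h.2 (k + 1) hn]
  simp [applySwaps, hk, h.1.2 k hk]

lemma Transforms.symm {α : Type u} {n : ℕ} {P : Finset ℕ} {s t : ℕ → α}
    (h : Transforms n P s t) : Transforms n P t s := by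
  refine ⟨h.1, fun i hi => ?_⟩
  by_cases h0 : i ∈ P
  · simp [applySwaps, h0, (h.apply_of_mem h0).2]
  · by_cases h1 : 0 < i ∧ i - 1 ∈ P
    · have hsub : i - 1 + 1 = i := by omega
      have := (h.apply_of_mem h1.2).1
      simp only [applySwaps, h0, h1, if_false, if_true, and_self, this, hsub]
    · rw [applySwaps, if_neg h0, if_neg h1, ← h.2 i hi, applySwaps, if_neg h0, if_neg h1]

lemma SwMatching.symm {α : Type u} {n : ℕ} {s t : ℕ → α}
    (h : SwMatching n s t) : SwMatching n t s :=
  h.imp fun _ => Transforms.symm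

lemma ValidTransform.symm {α : Type u} {n : ℕ} {P : Finset ℕ} {s t : ℕ → α}
    (h : ValidTransform n P s t) : ValidTransform n P t s := by
  refine ⟨h.1.symm, fun k hk => ?_⟩
  rw [(h.1.apply_of_mem hk).1, (h.1.apply_of_mem hk).2]
  exact (h.2 k hk).symm

/-- If `s2` reaches `s1` by a swap at `p` and `s3` by a swap at `p + 1`, then `s1` and `s3` do not
match, and every common match of `s1` and `s3` agrees with `s2` at `p`, `p + 1` and `p + 2`. -/
lemma not_swMatching_and_agree_of_adjacent {α : Type u} {n : ℕ} {s1 s2 s3 : ℕ → α}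
    {P Q : Finset ℕ} (hP : ValidTransform n P s2 s1) (hQ : ValidTransform n Q s2 s3)
    {p : ℕ} (hpP : p ∈ P) (hpQ : p + 1 ∈ Q) :
    ¬ SwMatching n s1 s3 ∧
    (∀ t : ℕ → α, SwMatching n t s1 → SwMatching n t s3 →
      t p = s2 p ∧ t (p + 1) = s2 (p + 1) ∧ t (p + 2) = s2 (p + 2)) := by
  classical
  have hn : p + 2 < n := hQ.1.1.1 _ hpQ
  have hpP' : p + 1 ∉ P := hP.1.1.2 p hpP
  have hpQ' : p ∉ Q := fun h => hQ.1.1.2 p h hpQ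
  have hab := hP.2 p hpP
  have hbc := hQ.2 (p + 1) hpQ
  have e1 := hP.1.apply_of_mem hpP
  have e3 := hQ.1.apply_of_mem hpQ
  let f : α → ℤ := fun x => if x = s2 (p + 1) then 1 else 0
  have fa : f (s2 p) = 0 := if_neg hab
  have fb : f (s2 (p + 1)) = 1 := if_pos rfl
  have fc : f (s2 (p + 1 + 1)) = 0 := if_neg hbc.symm
  have P0 := hP.1.sum_range_succ f p (by omega)
  have P1 := hP.1.sum_range_succ f (p + 1) (by omega)
  have Q0 := hQ.1.sum_range_succ f p (by omega)
  have Q1 := hQ.1.sum_range_succ f (p + 1) (by omega)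
  simp only [hpP, hpP', hpQ, hpQ', if_true, if_false, fa, fb, fc] at P0 P1 Q0 Q1
  refine ⟨?_, ?_⟩
  · rintro ⟨R, hR⟩
    have R0 := hR.sum_range_succ f p (by omega)
    have R1 := hR.sum_range_succ f (p + 1) (by omega)
    by_cases h0 : p ∈ R
    · rw [if_neg (hR.1.2 p h0)] at R1
      omega
    · rw [if_neg h0] at R0
      omega
  · rintro t ⟨R, hR⟩ ⟨S, hS⟩
    have R0 := hR.sum_range_succ f p (by omega)
    have R1 := hR.sum_range_succ f (p + 1) (by omega)
    have S0 := hS.sum_range_succ f p (by omega)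
    have S1 := hS.sum_range_succ f (p + 1) (by omega)
    by_cases h0 : p ∈ R
    · have h1 : p + 1 ∈ S := by
        by_contra h1
        rw [if_neg (hR.1.2 p h0)] at R1
        rw [if_neg h1] at S1
        omega
      have eR := hR.apply_of_mem h0
      have eS := hS.apply_of_mem h1
      exact ⟨by rw [← eR.2, e1.2], by rw [← eR.1, e1.1], by rw [← eS.1, e3.1]⟩
    · exfalso
      have h1 : p ∈ S := by
        by_contra h1
        rw [if_neg h0] at R0
        rw [if_neg h1] at S0
        omega
      rw [if_neg h0] at R0
      rw [if_neg (hS.1.2 p h1)] at S1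
      have ht : 0 ≤ f (t (p + 1)) := by
        change 0 ≤ ite _ _ _
        split_ifs <;> norm_num
      have T := Finset.sum_range_succ (fun i => f (t i)) (p + 1)
      have T2 := Finset.sum_range_succ (fun i => f (s2 i)) (p + 1)
      omega

/-- Let `s1,s2` be matching via the valid swap permutation `P` and
`s2,s3` matching via the valid swap permutation `Q`, and let `h = h_{s1,s2} ⊕ h_{s2,s3}`,
i.e. the indicator string of `(P \ Q) ∪ (Q \ P)`. If `h` has two consecutive `1`s, at
positions `p` and `p+1` (0-indexed), then `s1` and `s3` are not matching, and every
string `t` matching both `s1` and `s3` agrees with `s2` on the three letters at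
positions `p`, `p+1`, `p+2`. -/
theorem three_way_match_incompatible {α : Type u} (n : ℕ) (s1 s2 s3 : ℕ → α)
    (P Q : Finset ℕ)
    (hP : ValidTransform n P s1 s2) (hQ : ValidTransform n Q s2 s3)
    (p : ℕ) (hp : p ∈ (P \ Q) ∪ (Q \ P)) (hp1 : p + 1 ∈ (P \ Q) ∪ (Q \ P)) :
    ¬ SwMatching n s1 s3 ∧
    (∀ t : ℕ → α, SwMatching n t s1 → SwMatching n t s3 →
      t p = s2 p ∧ t (p + 1) = s2 (p + 1) ∧ t (p + 2) = s2 (p + 2)) := by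
  have hor : (p ∈ P ∧ p + 1 ∈ Q) ∨ (p ∈ Q ∧ p + 1 ∈ P) := by
    have h1 := hP.1.1.2 p
    have h2 := hQ.1.1.2 p
    simp only [Finset.mem_union, Finset.mem_sdiff] at hp hp1
    tauto
  rcases hor with ⟨h0, h1⟩ | ⟨h0, h1⟩
  · exact not_swMatching_and_agree_of_adjacent hP.symm hQ h0 h1
  · obtain ⟨hne, hag⟩ := not_swMatching_and_agree_of_adjacent hQ hP.symm h0 h1
    exact ⟨fun h => hne h.symm, fun t ht1 ht3 => hag t ht3 ht1⟩
end

section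
/- Let S = {s1, …, sk} be a set of pairwise matching strings of length n over Σ and d a nonnegative integer. There exists a string s* of length n over Σ with ∂S(s_i, s*) ≤ d for every i ∈ {1, …, k} if and only if there exists a binary string h* of length n−1 with ∂Ham(h_{s1,s_i}, h*) ≤ d for every i ∈ {1, …, k}. -/
/-!
Strings of length `n` over an alphabet `α` are modelled as functions `ℕ → α`,
where only the values at positions `0, …, n-1` (0-indexed) are relevant.
A swap at (0-indexed) position `p` exchanges the letters at positions `p` and `p+1`.
A swap permutation is modelled as a `Finset ℕ` of swap positions, pairwise at
distance ≥ 2 (equivalently: containing no two consecutive positions).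
-/

universe u

variable {α : Type u}

/-- The multiset of the first `q` letters of a string. -/
def prefixMultiset (s : ℕ → α) (q : ℕ) : Multiset α := (Multiset.range q).map s

lemma prefixMultiset_succ (s : ℕ → α) (q : ℕ) :
    prefixMultiset s (q + 1) = s q ::ₘ prefixMultiset s q := by
  simp [prefixMultiset, Multiset.range_succ]

/-- A swap permutation changes the prefix multiset ending at `p` only by a swap at `p`. -/
lemma Transforms.prefixMultiset_succ_cases {n : ℕ} {P : Finset ℕ} {s t : ℕ → α}
    (h : Transforms n P s t) (p : ℕ) (hp : p < n) :
    (p ∈ P → s p ::ₘ prefixMultiset t (p + 1) = s (p + 1) ::ₘ prefixMultiset s (p + 1)) ∧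
    (p ∉ P → prefixMultiset t (p + 1) = prefixMultiset s (p + 1)) := by
  induction p with
  | zero =>
    have ht := h.2 0 hp
    have hs0 : prefixMultiset s 0 = 0 := rfl
    have ht0 : prefixMultiset t 0 = 0 := rfl
    rw [prefixMultiset_succ t 0, prefixMultiset_succ s 0, hs0, ht0]
    by_cases h0 : 0 ∈ P
    · simp only [applySwaps, h0, if_true] at ht
      simp only [h0, ← ht, not_true, false_imp_iff, and_true]
      exact fun _ => Multiset.cons_swap _ _ _
    · simp [applySwaps, h0] at ht
      simp [h0, ht]
  | succ p ih =>
    obtain ⟨ih1, ih2⟩ := ih (by omega)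
    have ht := h.2 (p + 1) hp
    rw [prefixMultiset_succ t (p + 1), prefixMultiset_succ s (p + 1)]
    by_cases h1 : p + 1 ∈ P
    · have h0 : p ∉ P := fun h0 => h.1.2 p h0 h1
      simp only [applySwaps, h1, if_true] at ht
      simp only [h1, ← ht, ih2 h0, not_true, false_imp_iff, and_true]
      exact fun _ => Multiset.cons_swap _ _ _
    · by_cases h0 : p ∈ P
      · simp [applySwaps, h1, h0] at ht
        simp only [h1, ← ht, ih1 h0, not_false_eq_true, false_imp_iff, true_and, true_imp_iff]
      · simp [applySwaps, h1, h0] at ht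
        simp [h1, ht, ih2 h0]

lemma Transforms.mem_of_prefixMultiset_ne {n : ℕ} {P : Finset ℕ} {s t : ℕ → α}
    (h : Transforms n P s t) {p : ℕ} (hp : p < n)
    (hne : prefixMultiset t (p + 1) ≠ prefixMultiset s (p + 1)) : p ∈ P := by
  by_contra hmem
  exact hne ((h.prefixMultiset_succ_cases p hp).2 hmem)

lemma ValidTransform.mem_iff {n : ℕ} {P : Finset ℕ} {s t : ℕ → α}
    (h : ValidTransform n P s t) {p : ℕ} (hp : p < n) :
    p ∈ P ↔ prefixMultiset t (p + 1) ≠ prefixMultiset s (p + 1) := by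
  refine ⟨fun hmem heq => h.2 p hmem ?_, h.1.mem_of_prefixMultiset_ne hp⟩
  have hcons := (h.1.prefixMultiset_succ_cases p hp).1 hmem
  rw [heq] at hcons
  exact (Multiset.cons_inj_left _).1 hcons

/-- Valid swap permutations from a common string to matching strings differ by a subset of
any swap permutation between those strings. -/
lemma ValidTransform.symmDiff_subset {n : ℕ} {P P' Q : Finset ℕ} {r s t : ℕ → α}
    (hP : ValidTransform n P r s) (hP' : ValidTransform n P' r t) (hQ : Transforms n Q s t) :
    symmDiff P P' ⊆ Q := by
  intro p hp
  have hpn : p < n := by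
    rcases Finset.mem_symmDiff.1 hp with h | h
    · exact (Nat.lt_succ_self p).trans (hP.1.1.1 p h.1)
    · exact (Nat.lt_succ_self p).trans (hP'.1.1.1 p h.1)
  apply hQ.mem_of_prefixMultiset_ne hpn
  rw [Finset.mem_symmDiff, hP.mem_iff hpn, hP'.mem_iff hpn] at hp
  grind

/-- Swaps of valid swap permutations from a common string to matching strings do not overlap. -/
lemma ValidTransform.succ_notMem {n : ℕ} {P P' : Finset ℕ} {r s t : ℕ → α}
    (hP : ValidTransform n P r s) (hP' : ValidTransform n P' r t) (hst : SwMatching n s t)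
    {p : ℕ} (hp : p ∈ P) : p + 1 ∉ P' := by
  intro hp'
  obtain ⟨Q, hQ⟩ := hst
  have hsub := hP.symmDiff_subset hP' hQ
  refine hQ.1.2 p (hsub ?_) (hsub ?_) <;> rw [Finset.mem_symmDiff]
  · exact Or.inl ⟨hp, fun h => hP'.1.1.2 p h hp'⟩
  · exact Or.inr ⟨hp', hP.1.1.2 p hp⟩

/-- Among swaps taken from one set `U` of disjoint valid swaps, the composition of swap
permutations is given by the symmetric difference. -/
lemma ValidTransform.symmDiff_of_subset {n : ℕ} {U P H : Finset ℕ} {r s : ℕ → α}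
    (hU : IsSwapSet n U) (hne : ∀ p ∈ U, r p ≠ r (p + 1)) (hPU : P ⊆ U) (hHU : H ⊆ U)
    (hP : Transforms n P r s) : ValidTransform n (symmDiff P H) s (applySwaps H r) := by
  have hsub : ∀ p, p ∈ symmDiff P H → p ∈ U := by
    intro p hp
    rcases Finset.mem_symmDiff.1 hp with h | h
    · exact hPU h.1
    · exact hHU h.1
  refine ⟨⟨⟨fun p hp => hU.1 p (hsub p hp), fun p hp hp' => hU.2 p (hsub p hp) (hsub _ hp')⟩,
    fun i hi => ?_⟩, fun p hp => ?_⟩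
  · have hs := hP.2
    have := hU.1
    have := hU.2
    have hP1 : ∀ p, p ∈ P → p ∈ U := fun p h => hPU h
    have hH1 : ∀ p, p ∈ H → p ∈ U := fun p h => hHU h
    rcases i with _ | i <;>
    simp only [applySwaps, Finset.mem_symmDiff] at hs ⊢ <;> grind
  · have hpU := hsub p hp
    have hpn := hU.1 p hpU
    have hr := hne p hpU
    have h1 : p + 1 ∉ P := fun h => hU.2 p hpU (hPU h)
    have h2 : 0 < p → p - 1 ∉ P := fun h0 h =>
      hU.2 (p - 1) (hPU h) (by rwa [Nat.sub_add_cancel h0])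
    rw [← hP.2 p (by omega), ← hP.2 (p + 1) hpn]
    simp only [applySwaps]
    grind

lemma swapDist_le_iff {n d : ℕ} {s t : ℕ → α} :
    swapDist n s t ≤ (d : ℕ∞) ↔ ∃ Q, ValidTransform n Q s t ∧ Q.card ≤ d := by
  constructor
  · intro h
    have hne : {m : ℕ∞ | ∃ P : Finset ℕ, ValidTransform n P s t ∧ m = (P.card : ℕ∞)}.Nonempty := by
      by_contra hemp
      rw [Set.not_nonempty_iff_eq_empty] at hemp
      simp [swapDist, hemp] at h
    obtain ⟨Q, hQ, hcard⟩ := csInf_mem hne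
    refine ⟨Q, hQ, ?_⟩
    rw [swapDist, hcard] at h
    exact_mod_cast h
  · rintro ⟨Q, hQ, hcard⟩
    have hle : swapDist n s t ≤ (Q.card : ℕ∞) := sInf_le ⟨Q, hQ, rfl⟩
    exact hle.trans (by exact_mod_cast hcard)

/-- Let `S = {s 0, …, s (k-1)}` be pairwise matching strings of length
`n`, with `P i = π(s1, s i)` the valid swap permutation from `s1 = s 0` to `s i` (so the
swap string `h_{s1, s i}` is the indicator string of `P i`; for `i = 0` it is all-zero).
Then there is a length-`n` string `s*` with `∂S(s i, s*) ≤ d` for all `i` iff there is a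
binary string `h*` of length `n-1` with `∂Ham(h_{s1,s i}, h*) ≤ d` for all `i`. -/
theorem radius_swap_iff_radius_hamming {α : Type u} (n k : ℕ) (hk : 0 < k)
    (s : Fin k → ℕ → α)
    (hpair : ∀ i j, SwMatching n (s i) (s j))
    (d : ℕ) (P : Fin k → Finset ℕ)
    (hP : ∀ i, ValidTransform n (P i) (s ⟨0, hk⟩) (s i)) :
    (∃ sstar : ℕ → α, ∀ i, swapDist n (s i) sstar ≤ (d : ℕ∞)) ↔
    (∃ hstar : ℕ → Bool, ∀ i,
      hamDist (n - 1) (fun p => decide (p ∈ P i)) hstar ≤ d) := by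
  classical
  simp only [swapDist_le_iff]
  constructor
  · rintro ⟨sstar, hstar⟩
    obtain ⟨H, hH, -⟩ := hstar ⟨0, hk⟩
    refine ⟨fun p => decide (p ∈ H), fun i => ?_⟩
    obtain ⟨Q, hQ, hcard⟩ := hstar i
    refine le_trans (Finset.card_le_card fun p hp => ?_) hcard
    apply (hP i).symmDiff_subset hH hQ.1
    simp only [Finset.mem_filter, ne_eq, decide_eq_decide] at hp
    rw [Finset.mem_symmDiff]
    tauto
  · rintro ⟨hstar, hham⟩
    let U := Finset.univ.biUnion P
    have hU : IsSwapSet n U := by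
      refine ⟨fun p hp => ?_, fun p hp hp' => ?_⟩
      · obtain ⟨i, -, hi⟩ := Finset.mem_biUnion.1 hp
        exact (hP i).1.1.1 p hi
      · obtain ⟨i, -, hi⟩ := Finset.mem_biUnion.1 hp
        obtain ⟨j, -, hj⟩ := Finset.mem_biUnion.1 hp'
        exact (hP i).succ_notMem (hP j) (hpair i j) hi hj
    have hne : ∀ p ∈ U, s ⟨0, hk⟩ p ≠ s ⟨0, hk⟩ (p + 1) := by
      intro p hp
      obtain ⟨i, -, hi⟩ := Finset.mem_biUnion.1 hp
      exact (hP i).2 p hi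
    let H := U.filter (fun p => hstar p = true)
    have hPU : ∀ i, P i ⊆ U := fun i => Finset.subset_biUnion_of_mem P (Finset.mem_univ i)
    refine ⟨applySwaps H (s ⟨0, hk⟩), fun i => ⟨symmDiff (P i) H,
      ValidTransform.symmDiff_of_subset hU hne (hPU i) (Finset.filter_subset _ _) (hP i).1,
      le_trans (Finset.card_le_card fun p hp => ?_) (hham i)⟩⟩
    have hpU : p ∈ U := by
      rcases Finset.mem_symmDiff.1 hp with h | h
      · exact hPU i h.1
      · exact Finset.filter_subset _ _ h.1
    have hpn := hU.1 p hpU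
    simp only [H, Finset.mem_symmDiff, Finset.mem_filter, hpU, true_and] at hp
    simp only [Finset.mem_filter, Finset.mem_range]
    refine ⟨by omega, ?_⟩
    cases hb : hstar p <;> simp_all
end

section
/- Let S = {s1, …, sk} be a set of strings of length n over Σ such that C_S is nonempty, i.e., some string of length n is matching with every string of S. Then S admits a disentanglement: there exists a set S' = {s'_1, …, s'_k} of strings of length n over Σ such that (i) the strings of S' are pairwise matching, and (ii) for each i, the strings s_i and s'_i are matching and π(s_i, s'_i) contains only swaps that are necessary for s_i. -/
/-!
Strings of length `n` over an alphabet `α` are modelled as functions `ℕ → α`,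
where only the values at positions `0, …, n-1` (0-indexed) are relevant.
A swap at (0-indexed) position `p` exchanges the letters at positions `p` and `p+1`.
A swap permutation is modelled as a `Finset ℕ` of swap positions, pairwise at
distance ≥ 2 (equivalently: containing no two consecutive positions).
-/

universe u

variable {α : Type u}

/-- Multiset of the first `m` letters of a string, as an element of the free abelian group. -/
noncomputable def prefixCount (s : ℕ → α) (m : ℕ) : α →₀ ℤ :=
  ∑ i ∈ Finset.range m, Finsupp.single (s i) 1

theorem prefixCount_succ (s : ℕ → α) (m : ℕ) :
    prefixCount s (m + 1) = prefixCount s m + Finsupp.single (s m) 1 :=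
  Finset.sum_range_succ _ _

/-- The effect of a swap permutation on prefix counts: only a swap across the boundary matters. -/
theorem Transforms.prefixCount_eq {n : ℕ} {P : Finset ℕ} {s t : ℕ → α}
    (h : Transforms n P s t) {m : ℕ} (hm : m < n) :
    prefixCount t (m + 1) = prefixCount s (m + 1) +
      if m ∈ P then Finsupp.single (s (m + 1)) 1 - Finsupp.single (s m) 1 else 0 := by
  induction m with
  | zero =>
    have h0 := h.2 0 hm
    simp only [prefixCount_succ, ← h0, applySwaps]
    split_ifs <;> simp_all [prefixCount]
  | succ m ih =>
    have h1 := h.2 (m + 1) hm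
    have hd := h.1.2 m
    rw [prefixCount_succ t, ih (by omega), prefixCount_succ s (m + 1), ← h1]
    simp only [applySwaps, Nat.add_sub_cancel, Nat.succ_pos, true_and]
    by_cases hP : m ∈ P
    · simp only [hP, hd hP, if_true, if_false, prefixCount_succ s m]
      abel
    · by_cases hP' : m + 1 ∈ P
      · simp only [hP, hP', if_true, if_false]
        abel
      · simp [hP, hP']

/-- Every swap permutation can be pruned to a valid one. -/
theorem SwMatching.exists_validTransform {n : ℕ} {s t : ℕ → α} (h : SwMatching n s t) :
    ∃ P, ValidTransform n P s t := by
  classical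
  obtain ⟨P, ⟨hr, hd⟩, ht⟩ := h
  refine ⟨P.filter fun p => s p ≠ s (p + 1), ⟨⟨?_, ?_⟩, ?_⟩, ?_⟩
  · intro p hp
    exact hr p (Finset.mem_filter.1 hp).1
  · intro p hp hp'
    exact hd p (Finset.mem_filter.1 hp).1 (Finset.mem_filter.1 hp').1
  · intro i hi
    rw [← ht i hi]
    rcases i with _ | i
    · simp only [applySwaps, Finset.mem_filter]
      grind
    · have := hd i
      simp only [applySwaps, Finset.mem_filter, Nat.add_sub_cancel, Nat.succ_pos, true_and]
      grind
  · intro p hp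
    exact (Finset.mem_filter.1 hp).2

/-- If `c` has valid swaps at `p` towards `s₁` and at `p + 1` towards `s₂`, then every string
matching both `s₁` and `s₂` has a swap at `p` towards `s₁`. -/
theorem mem_of_overlapping_swaps {n p : ℕ} {c t s₁ s₂ : ℕ → α} {P Q V W : Finset ℕ}
    (hP : ValidTransform n P c s₁) (hQ : ValidTransform n Q c s₂)
    (hV : Transforms n V t s₁) (hW : Transforms n W t s₂)
    (hp : p ∈ P) (hq : p + 1 ∈ Q) : p ∈ V := by
  by_contra hpV
  have hn : p + 1 < n := hP.1.1.1 p hp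
  have hpQ : p ∉ Q := fun h => hQ.1.1.2 p h hq
  have hxy := hP.2 p hp
  have hyz := hQ.2 _ hq
  have e₁ := hP.1.prefixCount_eq (m := p) (by omega)
  have e₂ := hQ.1.prefixCount_eq (m := p) (by omega)
  have e₃ := hQ.1.prefixCount_eq hn
  have e₄ := hV.prefixCount_eq (m := p) (by omega)
  have e₅ := hW.prefixCount_eq (m := p) (by omega)
  have e₆ := hW.prefixCount_eq hn
  simp only [hp, hq, hpQ, hpV, if_true, if_false, add_zero] at e₁ e₂ e₃ e₄
  have hpW : p ∈ W := by
    by_contra hpW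
    simp only [hpW, if_false, add_zero] at e₅
    rw [e₅, ← e₄, e₁, add_eq_left, sub_eq_zero] at e₂
    exact hxy (Finsupp.single_left_injective one_ne_zero e₂).symm
  have hqW : p + 1 ∉ W := hW.1.2 p hpW
  simp only [hqW, if_false, add_zero] at e₆
  have hc := prefixCount_succ c (p + 1)
  have ht := prefixCount_succ t (p + 1)
  have key : (Finsupp.single (t (p + 1)) 1 : α →₀ ℤ) =
      Finsupp.single (c (p + 2)) 1 + Finsupp.single (c p) 1 - Finsupp.single (c (p + 1)) 1 := by
    rw [← e₆, e₃, ← e₄, e₁, hc] at ht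
    rw [← sub_eq_zero] at ht ⊢
    rw [← neg_eq_zero, ← ht]
    abel
  have := DFunLike.congr_fun key (c (p + 1))
  classical
  simp only [Finsupp.add_apply, Finsupp.sub_apply, Finsupp.single_apply] at this
  grind

/-- Two swap permutations without overlapping swaps turn a string into matching strings. -/
theorem swMatching_applySwaps {n : ℕ} {P Q : Finset ℕ} (hP : IsSwapSet n P) (hQ : IsSwapSet n Q)
    (hPQ : ∀ p ∈ P, p + 1 ∉ Q) (hQP : ∀ p ∈ Q, p + 1 ∉ P) (c : ℕ → α) :
    SwMatching n (applySwaps P c) (applySwaps Q c) := by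
  obtain ⟨hPr, hPd⟩ := hP
  obtain ⟨hQr, hQd⟩ := hQ
  refine ⟨symmDiff P Q, ⟨?_, ?_⟩, ?_⟩
  · intro p hp
    rw [Finset.mem_symmDiff] at hp
    grind
  · intro p hp hp'
    rw [Finset.mem_symmDiff] at hp hp'
    grind
  · intro i _
    rcases i with _ | _ | i <;>
    simp only [applySwaps, Finset.mem_symmDiff, Nat.add_sub_cancel, Nat.succ_pos, true_and] <;>
    grind

/-- Undoing part of a valid swap permutation is a valid swap permutation. -/
theorem ValidTransform.undo {n : ℕ} {P R : Finset ℕ} {c s : ℕ → α}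
    (h : ValidTransform n P c s) (hR : R ⊆ P) :
    ValidTransform n R s (applySwaps (P \ R) c) := by
  obtain ⟨⟨⟨hr, hd⟩, ht⟩, hv⟩ := h
  refine ⟨⟨⟨fun p hp => hr p (hR hp), fun p hp hp' => hd p (hR hp) (hR hp')⟩, ?_⟩, ?_⟩
  · intro i hi
    have h₁ := ht i hi
    have h₂ := ht (i + 1)
    have h₃ := ht (i - 1) (by omega)
    have a₁ := @hR i
    have a₂ := @hR (i - 1)
    have b₁ := hr i
    have b₂ := hd i
    have b₃ := hd (i - 1)
    rcases i with _ | i <;>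
    simp only [applySwaps, Finset.mem_sdiff, Nat.add_sub_cancel, Nat.succ_pos, true_and] at * <;>
    grind
  · intro p hp
    have h₁ := ht p (by have := hr p (hR hp); omega)
    have h₂ := ht (p + 1) (hr p (hR hp))
    have := hd p (hR hp)
    have := hv p (hR hp)
    have := hR hp
    simp only [applySwaps, Nat.add_sub_cancel, Nat.succ_pos, true_and] at h₁ h₂
    grind

/-- If `C_S` is nonempty (some length-`n` string matches every string
of `S`), then `S` admits a disentanglement: a family `s'` of length-`n` strings that are
pairwise matching, and such that each `s i` and `s' i` are matching via a valid swap
permutation containing only swaps necessary for `s i`. -/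
theorem disentanglement_exists {α : Type u} (n k : ℕ) (s : Fin k → ℕ → α)
    (hC : ∃ c : ℕ → α, ∀ j, SwMatching n c (s j)) :
    ∃ s' : Fin k → ℕ → α,
      (∀ i j, SwMatching n (s' i) (s' j)) ∧
      (∀ i, ∃ P : Finset ℕ, ValidTransform n P (s i) (s' i) ∧
        ∀ p ∈ P, NecessarySwap n s i p) := by
  classical
  obtain ⟨c, hc⟩ := hC
  choose P hP using fun j => (hc j).exists_validTransform
  let R : Fin k → Finset ℕ := fun i => (P i).filter fun p => ∃ j, p + 1 ∈ P j
  have hsub : ∀ i, IsSwapSet n (P i \ R i) := fun i =>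
    ⟨fun p hp => (hP i).1.1.1 p (Finset.mem_sdiff.1 hp).1, fun p hp hp' =>
      (hP i).1.1.2 p (Finset.mem_sdiff.1 hp).1 (Finset.mem_sdiff.1 hp').1⟩
  have hsep : ∀ i j, ∀ p ∈ P i \ R i, p + 1 ∉ P j \ R j := by
    intro i j p hp hq
    obtain ⟨hpP, hpR⟩ := Finset.mem_sdiff.1 hp
    exact hpR (Finset.mem_filter.2 ⟨hpP, j, (Finset.mem_sdiff.1 hq).1⟩)
  refine ⟨fun i => applySwaps (P i \ R i) c, fun i j =>
    swMatching_applySwaps (hsub i) (hsub j) (hsep i j) (hsep j i) c, fun i =>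
    ⟨R i, (hP i).undo (Finset.filter_subset _ _), ?_⟩⟩
  intro p hp t ht V hV
  obtain ⟨hpP, j, hq⟩ := Finset.mem_filter.1 hp
  obtain ⟨W, hW⟩ := ht j
  exact mem_of_overlapping_swaps (hP i) (hP j) hV.1 hW hpP hq
end

section
/- For any two strings s1, s2 of length n over Σ, ∂SH(s1,s2) = ∂Ham(s1,s2) − |G(s1,s2)|, where G(s1,s2) is the greedy swap set; i.e., the greedy left-to-right strategy of taking every available disjoint swap computes the Swap+Hamming distance. -/
/-!
Strings of length `n` over an alphabet `α` are modelled as functions `ℕ → α`,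
where only the values at positions `0, …, n-1` (0-indexed) are relevant.
A swap at (0-indexed) position `p` exchanges the letters at positions `p` and `p+1`.
A swap permutation is modelled as a `Finset ℕ` of swap positions, pairwise at
distance ≥ 2 (equivalently: containing no two consecutive positions).
-/

universe u

variable {α : Type u}

/-- Position `p` is an available swap: exchanging the distinct letters `s1 p` and `s1 (p + 1)`
repairs both mismatches with `s2`. -/
def SwapAvailable (s1 s2 : ℕ → α) (p : ℕ) : Prop :=
  s1 p = s2 (p + 1) ∧ s1 (p + 1) = s2 p ∧ s1 p ≠ s1 (p + 1)

theorem greedyMem.swapAvailable {s1 s2 : ℕ → α} {p : ℕ} (h : greedyMem s1 s2 p) :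
    SwapAvailable s1 s2 p := by
  cases p with
  | zero => exact h
  | succ p => exact h.1

theorem greedyMem.not_succ {s1 s2 : ℕ → α} {p : ℕ} (h : greedyMem s1 s2 p) :
    ¬ greedyMem s1 s2 (p + 1) := fun h' => h'.2 h

theorem SwapAvailable.greedyMem_or_pred {s1 s2 : ℕ → α} {p : ℕ} (h : SwapAvailable s1 s2 p) :
    greedyMem s1 s2 p ∨ 0 < p ∧ greedyMem s1 s2 (p - 1) := by
  cases p with
  | zero => exact Or.inl h
  | succ p =>
    by_cases hp : greedyMem s1 s2 p
    · exact Or.inr ⟨p.succ_pos, hp⟩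
    · exact Or.inl ⟨h, hp⟩

theorem mem_greedySet {n : ℕ} {s1 s2 : ℕ → α} {p : ℕ} :
    p ∈ greedySet n s1 s2 ↔ p + 1 < n ∧ greedyMem s1 s2 p := by
  simp only [greedySet, Finset.mem_filter, Finset.mem_range]
  exact and_congr_left fun _ => by omega

/-- The greedy set is a largest set of pairwise disjoint available swaps. -/
theorem card_le_card_greedySet {n : ℕ} {s1 s2 : ℕ → α} {Q : Finset ℕ} (hQ : IsSwapSet n Q)
    (hav : ∀ p ∈ Q, SwapAvailable s1 s2 p) : Q.card ≤ (greedySet n s1 s2).card := by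
  classical
  refine Finset.card_le_card_of_injOn (fun p => if greedyMem s1 s2 p then p else p - 1) ?_ ?_
  · intro p hp
    have hn := hQ.1 p hp
    have hg := (hav p hp).greedyMem_or_pred
    simp only [Finset.mem_coe, mem_greedySet]
    split_ifs with h
    · exact ⟨hn, h⟩
    · exact ⟨by omega, (hg.resolve_left h).2⟩
  · intro p hp q hq hpq
    have hp' := (hav p hp).greedyMem_or_pred
    have hq' := (hav q hq).greedyMem_or_pred
    have hp1 := hQ.2 p hp
    have hq1 := hQ.2 q hq
    simp only [Finset.mem_coe] at hp hq hpq
    have key : p = q ∨ p = q + 1 ∨ q = p + 1 := by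
      split_ifs at hpq <;> grind
    rcases key with h | h | h
    · exact h
    · exact absurd (h ▸ hp) hq1
    · exact absurd (h ▸ hq) hp1

theorem isSwapSet_greedySet (n : ℕ) (s1 s2 : ℕ → α) : IsSwapSet n (greedySet n s1 s2) :=
  ⟨fun _ hp => (mem_greedySet.1 hp).1,
    fun _ hp hp' => (mem_greedySet.1 hp).2.not_succ (mem_greedySet.1 hp').2⟩

theorem applySwaps_of_mem {P : Finset ℕ} {p : ℕ} (s : ℕ → α) (hp : p ∈ P) :
    applySwaps P s p = s (p + 1) := if_pos hp

theorem applySwaps_succ_of_mem {n : ℕ} {P : Finset ℕ} {p : ℕ} (hP : IsSwapSet n P)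
    (s : ℕ → α) (hp : p ∈ P) : applySwaps P s (p + 1) = s p := by
  simp [applySwaps, hP.2 p hp, hp]

theorem applySwaps_of_notMem {P : Finset ℕ} {i : ℕ} (s : ℕ → α) (hi : i ∉ P)
    (hi' : ∀ p ∈ P, i ≠ p + 1) : applySwaps P s i = s i := by
  have h : ¬ (0 < i ∧ i - 1 ∈ P) := fun h => hi' _ h.2 (by omega)
  simp [applySwaps, hi, h]

theorem hamDist_congr_left {β : Type*} {n : ℕ} {s s' : ℕ → β} (t : ℕ → β)
    (h : ∀ i < n, s i = s' i) : hamDist n s t = hamDist n s' t := by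
  classical
  simp only [hamDist]
  congr 1
  ext i
  simp only [Finset.mem_filter, Finset.mem_range]
  exact and_congr_right fun hi => by rw [h i hi]

/-- A set of disjoint swaps repairs at most one mismatch per swap, and one more for each swap
that is available. -/
theorem hamDist_le_applySwaps {n : ℕ} {s1 s2 : ℕ → α} {P : Finset ℕ} (hP : IsSwapSet n P)
    (hne : ∀ p ∈ P, s1 p ≠ s1 (p + 1)) :
    hamDist n s1 s2 ≤
      P.card + hamDist n (applySwaps P s1) s2 + (greedySet n s1 s2).card := by
  classical
  let A := P.filter fun p => s1 (p + 1) = s2 p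
  let B := P.filter fun p => s1 p = s2 (p + 1)
  have hsub : (Finset.range n).filter (fun i => s1 i ≠ s2 i) ⊆
      (Finset.range n).filter (fun i => applySwaps P s1 i ≠ s2 i) ∪
        (A ∪ B.image (· + 1)) := by
    intro i hi
    simp only [Finset.mem_union, Finset.mem_filter, Finset.mem_range, Finset.mem_image, A, B]
      at hi ⊢
    by_cases heq : applySwaps P s1 i = s2 i
    · right
      by_cases hiP : i ∈ P
      · exact Or.inl ⟨hiP, applySwaps_of_mem s1 hiP ▸ heq⟩
      · right
        by_contra hcon
        refine hi.2 ((applySwaps_of_notMem s1 hiP fun p hp hip => hcon ?_).symm.trans heq)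
        subst hip
        exact ⟨p, ⟨hp, applySwaps_succ_of_mem hP s1 hp ▸ heq⟩, rfl⟩
    · exact Or.inl ⟨hi.1, heq⟩
  have hAB : (A ∩ B).card ≤ (greedySet n s1 s2).card := by
    have hmem : ∀ p ∈ A ∩ B, p ∈ P ∧ SwapAvailable s1 s2 p := by
      intro p hp
      simp only [Finset.mem_inter, Finset.mem_filter, A, B] at hp
      exact ⟨hp.1.1, hp.2.2, hp.1.2, hne p hp.1.1⟩
    exact card_le_card_greedySet ⟨fun p hp => hP.1 p (hmem p hp).1,
      fun p hp hp' => hP.2 p (hmem p hp).1 (hmem _ hp').1⟩ fun p hp => (hmem p hp).2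
  have hU : (A ∪ B).card ≤ P.card :=
    Finset.card_le_card (Finset.union_subset (Finset.filter_subset _ _) (Finset.filter_subset _ _))
  have hsum := Finset.card_union_add_card_inter A B
  have hcard := Finset.card_le_card hsub
  have h₁ := Finset.card_union_le
    ((Finset.range n).filter (fun i => applySwaps P s1 i ≠ s2 i)) (A ∪ B.image (· + 1))
  have h₂ := Finset.card_union_le A (B.image (· + 1))
  have h₃ : (B.image (· + 1)).card ≤ B.card := Finset.card_image_le
  have e₁ : hamDist n s1 s2 = ((Finset.range n).filter (fun i => s1 i ≠ s2 i)).card := by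
    unfold hamDist; congr
  have e₂ : hamDist n (applySwaps P s1) s2 =
      ((Finset.range n).filter (fun i => applySwaps P s1 i ≠ s2 i)).card := by
    unfold hamDist; congr
  omega

/-- Every greedy swap repairs two mismatches. -/
theorem hamDist_applySwaps_greedySet_add_le (n : ℕ) (s1 s2 : ℕ → α) :
    hamDist n (applySwaps (greedySet n s1 s2) s1) s2 + 2 * (greedySet n s1 s2).card ≤
      hamDist n s1 s2 := by
  classical
  have hG := isSwapSet_greedySet n s1 s2
  have hav : ∀ p ∈ greedySet n s1 s2, SwapAvailable s1 s2 p :=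
    fun p hp => (mem_greedySet.1 hp).2.swapAvailable
  generalize greedySet n s1 s2 = G at hG hav ⊢
  have hdisj : Disjoint G (G.image (· + 1)) := by
    simp only [Finset.disjoint_left, Finset.mem_image, not_exists, not_and]
    rintro _ hp q hq rfl
    exact hG.2 q hq hp
  have hdisj' : Disjoint ((Finset.range n).filter (fun i => applySwaps G s1 i ≠ s2 i))
      (G ∪ G.image (· + 1)) := by
    simp only [Finset.disjoint_right, Finset.mem_union, Finset.mem_image, Finset.mem_filter,
      not_and, not_not]
    rintro i (hi | ⟨p, hp, rfl⟩) -
    · rw [applySwaps_of_mem s1 hi, (hav i hi).2.1]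
    · rw [applySwaps_succ_of_mem hG s1 hp, (hav p hp).1]
  have hsub : (Finset.range n).filter (fun i => applySwaps G s1 i ≠ s2 i) ∪
      (G ∪ G.image (· + 1)) ⊆ (Finset.range n).filter (fun i => s1 i ≠ s2 i) := by
    intro i hi
    by_cases hiG : i ∈ G ∪ G.image (· + 1)
    · simp only [Finset.mem_union, Finset.mem_image] at hiG
      rw [Finset.mem_filter, Finset.mem_range]
      rcases hiG with hi | ⟨p, hp, rfl⟩
      · exact ⟨by have := hG.1 i hi; omega, (hav i hi).2.1 ▸ (hav i hi).2.2⟩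
      · exact ⟨hG.1 p hp, (hav p hp).1 ▸ (hav p hp).2.2.symm⟩
    · have hi' := (Finset.mem_union.1 hi).resolve_right hiG
      simp only [Finset.mem_union, Finset.mem_image, not_or, not_exists, not_and] at hiG
      rwa [Finset.mem_filter, applySwaps_of_notMem s1 hiG.1 fun p hp h => hiG.2 p hp h.symm,
        ← Finset.mem_filter (p := fun i => s1 i ≠ s2 i)] at hi'
  have hcard := Finset.card_le_card hsub
  rw [Finset.card_union_of_disjoint hdisj', Finset.card_union_of_disjoint hdisj,
    Finset.card_image_of_injective _ (add_left_injective 1)] at hcard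
  have e₁ : hamDist n s1 s2 = ((Finset.range n).filter (fun i => s1 i ≠ s2 i)).card := by
    unfold hamDist; congr
  have e₂ : hamDist n (applySwaps G s1) s2 =
      ((Finset.range n).filter (fun i => applySwaps G s1 i ≠ s2 i)).card := by
    unfold hamDist; congr
  omega

/-- The greedy left-to-right strategy computes the Swap+Hamming
distance: `∂SH(s1,s2) = ∂Ham(s1,s2) − |G(s1,s2)|`, where `G(s1,s2)` is the greedy
swap set. -/
theorem shDist_eq_hamDist_sub_greedy {α : Type u} (n : ℕ) (s1 s2 : ℕ → α) :
    shDist n s1 s2 = ((hamDist n s1 s2 - (greedySet n s1 s2).card : ℕ) : ℕ∞) := by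
  apply le_antisymm
  · have hvalid : ValidTransform n (greedySet n s1 s2) s1
        (applySwaps (greedySet n s1 s2) s1) :=
      ⟨⟨isSwapSet_greedySet n s1 s2, fun _ _ => rfl⟩,
        fun p hp => (mem_greedySet.1 hp).2.swapAvailable.2.2⟩
    have hle := hamDist_applySwaps_greedySet_add_le n s1 s2
    calc shDist n s1 s2
        ≤ swapDist n s1 (applySwaps (greedySet n s1 s2) s1) +
            (hamDist n (applySwaps (greedySet n s1 s2) s1) s2 : ℕ∞) := iInf_le _ _
      _ ≤ ((greedySet n s1 s2).card : ℕ∞) +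
            (hamDist n (applySwaps (greedySet n s1 s2) s1) s2 : ℕ∞) :=
          add_le_add (sInf_le ⟨_, hvalid, rfl⟩) le_rfl
      _ ≤ _ := by
          norm_cast
          omega
  · refine le_iInf fun t => ?_
    rcases Set.eq_empty_or_nonempty
      {m : ℕ∞ | ∃ P : Finset ℕ, ValidTransform n P s1 t ∧ m = (P.card : ℕ∞)} with h | h
    · simp [swapDist, h]
    · obtain ⟨P, hP, hm⟩ := csInf_mem h
      rw [swapDist, hm, ← hamDist_congr_left s2 hP.1.2]
      have hle := hamDist_le_applySwaps (s2 := s2) hP.1.1 hP.2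
      norm_cast
      omega
end

section
/- For any three strings s1, s2, s3 of length n over Σ, the weakened triangle inequality holds: ∂SH(s1,s3) ≤ min{ 2·∂SH(s1,s2) + ∂SH(s2,s3), ∂SH(s1,s2) + 2·∂SH(s2,s3) }. -/
/-!
Strings of length `n` over an alphabet `α` are modelled as functions `ℕ → α`,
where only the values at positions `0, …, n-1` (0-indexed) are relevant.
A swap at (0-indexed) position `p` exchanges the letters at positions `p` and `p+1`.
A swap permutation is modelled as a `Finset ℕ` of swap positions, pairwise at
distance ≥ 2 (equivalently: containing no two consecutive positions).
-/

universe u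

variable {α : Type u}

/-- The position whose letter ends up at position `i` after performing the swaps in `P`. -/
def swapIndex (P : Finset ℕ) (i : ℕ) : ℕ :=
  if i ∈ P then i + 1 else if 0 < i ∧ i - 1 ∈ P then i - 1 else i

theorem applySwaps_eq_comp_swapIndex (P : Finset ℕ) (s : ℕ → α) (i : ℕ) :
    applySwaps P s i = s (swapIndex P i) := by
  unfold applySwaps swapIndex
  split_ifs <;> rfl

theorem IsSwapSet.swapIndex_swapIndex {n : ℕ} {P : Finset ℕ} (hP : IsSwapSet n P) (i : ℕ) :
    swapIndex P (swapIndex P i) = i := by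
  have h := hP.2
  unfold swapIndex
  grind

theorem IsSwapSet.swapIndex_lt {n : ℕ} {P : Finset ℕ} (hP : IsSwapSet n P) {i : ℕ}
    (hi : i < n) : swapIndex P i < n := by
  have h := hP.1
  unfold swapIndex
  grind

theorem IsSwapSet.subset {n : ℕ} {P R : Finset ℕ} (hP : IsSwapSet n P) (h : R ⊆ P) :
    IsSwapSet n R :=
  ⟨fun p hp => hP.1 p (h hp), fun p hp hp' => hP.2 p (h hp) (h hp')⟩

/-- Swaps of identical letters can be discarded, so any swap set bounds the distance. -/
theorem shDist_le_of_isSwapSet {n : ℕ} {R : Finset ℕ} (hR : IsSwapSet n R) (s1 s2 : ℕ → α) :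
    shDist n s1 s2 ≤ ((R.card + hamDist n (applySwaps R s1) s2 : ℕ) : ℕ∞) := by
  classical
  set R' := R.filter (fun p => s1 p ≠ s1 (p + 1))
  have hsub : R' ⊆ R := Finset.filter_subset _ _
  have happly : ∀ i < n, applySwaps R' s1 i = applySwaps R s1 i := by
    intro i _
    have h := hR.2
    have hmem : ∀ p, p ∈ R' ↔ p ∈ R ∧ s1 p ≠ s1 (p + 1) := fun p => Finset.mem_filter
    unfold applySwaps
    grind
  have hvalid : ValidTransform n R' s1 (applySwaps R s1) :=
    ⟨⟨hR.subset hsub, happly⟩, fun p hp => (Finset.mem_filter.mp hp).2⟩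
  refine (iInf_le _ (applySwaps R s1)).trans ?_
  push_cast
  gcongr
  have hle : swapDist n s1 (applySwaps R s1) ≤ (R'.card : ℕ∞) := sInf_le ⟨R', hvalid, rfl⟩
  refine hle.trans ?_
  exact_mod_cast Finset.card_le_card hsub

theorem exists_isSwapSet_of_shDist_ne_top {n : ℕ} {s1 s2 : ℕ → α} (h : shDist n s1 s2 ≠ ⊤) :
    ∃ P, IsSwapSet n P ∧
      shDist n s1 s2 = ((P.card + hamDist n (applySwaps P s1) s2 : ℕ) : ℕ∞) := by
  classical
  have : Nonempty (ℕ → α) := ⟨s1⟩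
  obtain ⟨t, ht⟩ : ∃ t : ℕ → α, swapDist n s1 t + (hamDist n t s2 : ℕ∞) = shDist n s1 s2 :=
    ciInf_mem fun t : ℕ → α => swapDist n s1 t + (hamDist n t s2 : ℕ∞)
  have hne : swapDist n s1 t ≠ ⊤ := by
    intro htop
    rw [htop, top_add] at ht
    exact h ht.symm
  have hnonempty :
      {m : ℕ∞ | ∃ P : Finset ℕ, ValidTransform n P s1 t ∧ m = (P.card : ℕ∞)}.Nonempty := by
    by_contra hempty
    rw [Set.not_nonempty_iff_eq_empty] at hempty
    exact hne (by rw [swapDist, hempty, sInf_empty])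
  obtain ⟨P, hP, hcard⟩ := csInf_mem hnonempty
  refine ⟨P, hP.1.1, ?_⟩
  have hham : hamDist n (applySwaps P s1) s2 = hamDist n t s2 := by
    unfold hamDist
    congr 1
    ext i
    simp only [Finset.mem_filter, Finset.mem_range, and_congr_right_iff]
    intro hi
    rw [hP.1.2 i hi]
  rw [← ht, hham, Nat.cast_add, ← hcard]
  rfl

/-- The swaps that belong to exactly one of `P` and `Q` and overlap no other swap. -/
def isolatedSwaps (P Q : Finset ℕ) : Finset ℕ :=
  (P ∪ Q).filter fun p =>
    ¬(p ∈ P ∧ p ∈ Q) ∧ p + 1 ∉ P ∪ Q ∧ (0 < p → p - 1 ∉ P ∪ Q)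

/-- The swaps of `P ∪ Q` that overlap another swap of `P ∪ Q`. -/
def overlappingSwaps (P Q : Finset ℕ) : Finset ℕ :=
  (P ∪ Q).filter fun p => p + 1 ∈ P ∪ Q ∨ (0 < p ∧ p - 1 ∈ P ∪ Q)

/-- The last positions covered by maximal runs of at least two overlapping swaps. -/
def runEnds (n : ℕ) (P Q : Finset ℕ) : Finset ℕ :=
  (Finset.range n).filter fun i =>
    i ∉ P ∪ Q ∧ 2 ≤ i ∧ i - 1 ∈ P ∪ Q ∧ i - 2 ∈ P ∪ Q

theorem IsSwapSet.isolatedSwaps {n : ℕ} {P Q : Finset ℕ} (hP : IsSwapSet n P)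
    (hQ : IsSwapSet n Q) : IsSwapSet n (isolatedSwaps P Q) := by
  have h1 := hP.1
  have h2 := hQ.1
  unfold _root_.isolatedSwaps
  constructor <;> grind

theorem card_isolatedSwaps_add_card_overlappingSwaps_le (P Q : Finset ℕ) :
    (isolatedSwaps P Q).card + (overlappingSwaps P Q).card ≤ P.card + Q.card := by
  have hdisj : Disjoint (isolatedSwaps P Q) (overlappingSwaps P Q) := by
    rw [Finset.disjoint_left]
    unfold isolatedSwaps overlappingSwaps
    grind
  rw [← Finset.card_union_of_disjoint hdisj]
  refine (Finset.card_le_card ?_).trans (Finset.card_union_le P Q)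
  exact Finset.union_subset (Finset.filter_subset _ _) (Finset.filter_subset _ _)

theorem runEnds_comm (n : ℕ) (P Q : Finset ℕ) : runEnds n P Q = runEnds n Q P := by
  simp only [runEnds, Finset.union_comm]

/-- Every maximal run of at least two overlapping swaps contains a swap of `Q`. -/
theorem card_runEnds_le {n : ℕ} {P : Finset ℕ} (hP : IsSwapSet n P) (Q : Finset ℕ) :
    (runEnds n P Q).card ≤ Q.card := by
  have h := hP.2
  refine Finset.card_le_card_of_injOn (fun i => if i - 1 ∈ Q then i - 1 else i - 2) ?_ ?_
  · intro i hi
    simp only [runEnds, Finset.coe_filter, Set.mem_ofPred_eq, Finset.mem_union] at hi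
    have := h (i - 2)
    have h' : i - 2 + 1 = i - 1 := by omega
    grind
  · intro i hi j hj hij
    simp only [runEnds, Finset.coe_filter, Set.mem_ofPred_eq] at hi hj
    grind

theorem swapIndex_isolatedSwaps {n : ℕ} {P Q : Finset ℕ} (hP : IsSwapSet n P)
    (hQ : IsSwapSet n Q) {i : ℕ} (hi : i < n) (hover : i ∉ overlappingSwaps P Q)
    (hend : i ∉ runEnds n P Q) :
    swapIndex (isolatedSwaps P Q) i = swapIndex P (swapIndex Q i) := by
  have h1 := hP.2
  have h2 := hQ.2
  simp only [overlappingSwaps, runEnds, Finset.mem_filter, Finset.mem_union,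
    Finset.mem_range] at hover hend
  simp only [swapIndex, isolatedSwaps, Finset.mem_filter, Finset.mem_union]
  rcases i with _ | _ | i
  · grind
  · grind
  · simp only [show i + 1 + 1 - 1 = i + 1 by omega, show i + 1 + 1 - 2 = i by omega] at *
    grind

theorem hamDist_applySwaps_isolatedSwaps_le {n : ℕ} {P Q : Finset ℕ} (hP : IsSwapSet n P)
    (hQ : IsSwapSet n Q) (s1 s2 s3 : ℕ → α) :
    hamDist n (applySwaps (isolatedSwaps P Q) s1) s3 ≤
      (overlappingSwaps P Q).card + (runEnds n P Q).card +
        (hamDist n (applySwaps P s1) s2 + hamDist n (applySwaps Q s2) s3) := by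
  classical
  set A := (Finset.range n).filter fun i => applySwaps P s1 i ≠ s2 i with hA
  set B := (Finset.range n).filter fun i => applySwaps Q s2 i ≠ s3 i with hB
  have hsub : ((Finset.range n).filter fun i =>
        applySwaps (isolatedSwaps P Q) s1 i ≠ s3 i) ⊆
      (overlappingSwaps P Q ∪ runEnds n P Q) ∪ (A.image (swapIndex Q) ∪ B) := by
    intro i hi
    rw [Finset.mem_filter, Finset.mem_range] at hi
    by_contra hnot
    simp only [Finset.mem_union, not_or] at hnot
    obtain ⟨⟨hover, hend⟩, hiA, hiB⟩ := hnot
    have hB' : applySwaps Q s2 i = s3 i := by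
      by_contra hne
      exact hiB (Finset.mem_filter.mpr ⟨Finset.mem_range.mpr hi.1, hne⟩)
    have hA' : applySwaps P s1 (swapIndex Q i) = s2 (swapIndex Q i) := by
      by_contra hne
      exact hiA (Finset.mem_image.mpr ⟨swapIndex Q i, Finset.mem_filter.mpr
        ⟨Finset.mem_range.mpr (hQ.swapIndex_lt hi.1), hne⟩, hQ.swapIndex_swapIndex i⟩)
    apply hi.2
    rw [← hB', applySwaps_eq_comp_swapIndex, swapIndex_isolatedSwaps hP hQ hi.1 hover hend,
      applySwaps_eq_comp_swapIndex Q, ← hA', applySwaps_eq_comp_swapIndex]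
  have hcard := (Finset.card_le_card hsub).trans <| (Finset.card_union_le _ _).trans <|
    add_le_add (Finset.card_union_le _ _) <|
      (Finset.card_union_le _ _).trans (add_le_add_left Finset.card_image_le _)
  unfold hamDist
  exact le_of_eq_of_le (by congr!) (hcard.trans (le_of_eq (by rw [hA, hB]; congr!)))

/-- Weakened triangle inequality for the Swap+Hamming distance:
`∂SH(s1,s3) ≤ min { 2·∂SH(s1,s2) + ∂SH(s2,s3), ∂SH(s1,s2) + 2·∂SH(s2,s3) }`. -/
theorem shDist_weak_triangle {α : Type u} (n : ℕ) (s1 s2 s3 : ℕ → α) :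
    shDist n s1 s3 ≤
      min (2 * shDist n s1 s2 + shDist n s2 s3)
          (shDist n s1 s2 + 2 * shDist n s2 s3) := by
  rcases eq_or_ne (shDist n s1 s2) ⊤ with h12 | h12
  · simp [h12]
  rcases eq_or_ne (shDist n s2 s3) ⊤ with h23 | h23
  · simp [h23]
  obtain ⟨P, hP, hP12⟩ := exists_isSwapSet_of_shDist_ne_top h12
  obtain ⟨Q, hQ, hQ23⟩ := exists_isSwapSet_of_shDist_ne_top h23
  have hbound := shDist_le_of_isSwapSet (hP.isolatedSwaps hQ) s1 s3
  have hham := hamDist_applySwaps_isolatedSwaps_le hP hQ s1 s2 s3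
  have hswaps := card_isolatedSwaps_add_card_overlappingSwaps_le P Q
  have hendQ := card_runEnds_le hP Q
  have hendP := card_runEnds_le hQ P
  rw [runEnds_comm] at hendP
  rw [hP12, hQ23]
  refine hbound.trans (le_min ?_ ?_) <;> norm_cast <;> omega
end

section
/- Let S = {s1, …, sk} be a set of strings of length n over Σ, let d, D be nonnegative integers, and let x_1, …, x_k be integers with 0 ≤ x_j ≤ d; set x = max_j x_j. Let 0 and 1 be two letters not in Σ, and for each j define the length-2x strings a_j = (01)^{x_j}(00)^{x−x_j} and b_j = (10)^{x_j}(00)^{x−x_j}, and let S' = {s_j · a_j : 1 ≤ j ≤ k} ∪ {s_j · b_j : 1 ≤ j ≤ k} (2k strings of length n+2x over Σ ∪ {0,1}). Then there exists a string s̃ of length n+2x over Σ ∪ {0,1} with ∂Ham(u, s̃) ≤ d for every u ∈ S' and Σ_{u ∈ S'} ∂Ham(u, s̃) ≤ 2D, if and only if there exists a string s* of length n over Σ ∪ {0,1} with ∂Ham(s*, s_j) ≤ d − x_j for every j and Σ_{j=1}^{k} ∂Ham(s*, s_j) ≤ D − Σ_{j=1}^{k} x_j. -/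
/-!
Strings of length `n` over an alphabet `α` are modelled as functions `ℕ → α`,
where only the values at positions `0, …, n-1` (0-indexed) are relevant.
A swap at (0-indexed) position `p` exchanges the letters at positions `p` and `p+1`.
A swap permutation is modelled as a `Finset ℕ` of swap positions, pairwise at
distance ≥ 2 (equivalently: containing no two consecutive positions).
-/

universe u

variable {α : Type u}

open scoped Classical in
theorem hamDist_eq_sum {β : Type*} (n : ℕ) (s t : ℕ → β) :
    hamDist n s t = ∑ i ∈ Finset.range n, if s i ≠ t i then 1 else 0 := by
  rw [hamDist, Finset.card_filter]
  exact Finset.sum_congr rfl fun i _ => by congr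

theorem hamDist_congr {β : Type*} {n : ℕ} {s s' t t' : ℕ → β}
    (hs : ∀ i < n, s i = s' i) (ht : ∀ i < n, t i = t' i) :
    hamDist n s t = hamDist n s' t' := by
  classical
  simp only [hamDist_eq_sum]
  refine Finset.sum_congr rfl fun i hi => ?_
  rw [hs i (Finset.mem_range.1 hi), ht i (Finset.mem_range.1 hi)]

theorem hamDist_symm {β : Type*} (n : ℕ) (s t : ℕ → β) : hamDist n s t = hamDist n t s := by
  classical
  simp only [hamDist_eq_sum, ne_comm]

theorem hamDist_triangle_left {β : Type*} (n : ℕ) (s t r : ℕ → β) :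
    hamDist n s t ≤ hamDist n s r + hamDist n t r := by
  classical
  simp only [hamDist_eq_sum, ← Finset.sum_add_distrib]
  refine Finset.sum_le_sum fun i _ => ?_
  split_ifs <;> simp_all

theorem hamDist_add {β : Type*} (n m : ℕ) (s t : ℕ → β) :
    hamDist (n + m) s t =
      hamDist n s t + hamDist m (fun i => s (n + i)) (fun i => t (n + i)) := by
  classical
  simp only [hamDist_eq_sum, Finset.sum_range_add]

open scoped Classical in
theorem hamDist_two_mul_succ {β : Type*} (m : ℕ) (s t : ℕ → β) :
    hamDist (2 * (m + 1)) s t = hamDist (2 * m) s t +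
      ((if s (2 * m) ≠ t (2 * m) then 1 else 0) +
        if s (2 * m + 1) ≠ t (2 * m + 1) then 1 else 0) := by
  simp only [hamDist_eq_sum, Nat.mul_succ, Finset.sum_range_succ, add_assoc]

/-- The string `(01)^y (00)^∞` for `r = 1`, and `(10)^y (00)^∞` for `r = 0`. -/
def parityGadget (α : Type u) (y r : ℕ) : ℕ → α ⊕ Bool := fun i =>
  if i < 2 * y ∧ i % 2 = r then Sum.inr true else Sum.inr false

theorem hamDist_parityGadget_zero (y m r : ℕ) (hr : r < 2) :
    hamDist (2 * m) (parityGadget α y r) (fun _ => Sum.inr false) = min m y := by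
  induction m with
  | zero => simp [hamDist]
  | succ m ih =>
    rw [hamDist_two_mul_succ, ih]
    have h₀ : 2 * m % 2 = 0 := by lia
    have h₁ : (2 * m + 1) % 2 = 1 := by lia
    by_cases hm : m < y <;> interval_cases r <;>
      simp [parityGadget, h₀, h₁, hm, show 2 * m + 1 < 2 * y ↔ m < y by lia] <;> lia

theorem hamDist_parityGadget_one_zero (y m : ℕ) :
    hamDist (2 * m) (parityGadget α y 1) (parityGadget α y 0) = 2 * min m y := by
  induction m with
  | zero => simp [hamDist]
  | succ m ih =>
    rw [hamDist_two_mul_succ, ih]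
    have h₀ : 2 * m % 2 = 0 := by lia
    have h₁ : (2 * m + 1) % 2 = 1 := by lia
    by_cases hm : m < y <;>
      simp [parityGadget, h₀, h₁, hm, show 2 * m + 1 < 2 * y ↔ m < y by lia] <;> lia

/-- The distance of a string to a concatenation `p · q` with `|p| = n` splits at position `n`. -/
theorem hamDist_append {β : Type*} (n m : ℕ) (p q t : ℕ → β) :
    hamDist (n + m) (fun i => if i < n then p i else q (i - n)) t =
      hamDist n t p + hamDist m q (fun i => t (n + i)) := by
  rw [hamDist_add, hamDist_symm n t p]
  congr 1
  · exact hamDist_congr (fun i hi => if_pos hi) fun _ _ => rfl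
  · exact hamDist_congr (fun i _ => by simp) fun _ _ => rfl

/-- Reduction of the mixed radius+sum Hamming consensus to the plain
one. The alphabet `Σ ∪ {0,1}` is modelled as `α ⊕ Bool` with `0 = Sum.inr false` and
`1 = Sum.inr true`; strings are 0-indexed, `X = max_j x j`, and for each `j` the gadget
strings `a j = (01)^{x j} (00)^{X - x j}` and `b j = (10)^{x j} (00)^{X - x j}` of
length `2X` are appended to `s j`. The bounds `≤ d − x j` and `≤ D − ∑ j, x j` are
stated additively (their integer reading). -/
theorem mixed_hamming_reduction {α : Type u} (n k d D : ℕ)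
    (s : Fin k → ℕ → α) (x : Fin k → ℕ) (hx : ∀ j, x j ≤ d) :
    (let X : ℕ := Finset.univ.sup x
     let a : Fin k → ℕ → α ⊕ Bool := fun j i =>
       if i < 2 * x j ∧ i % 2 = 1 then Sum.inr true else Sum.inr false
     let b : Fin k → ℕ → α ⊕ Bool := fun j i =>
       if i < 2 * x j ∧ i % 2 = 0 then Sum.inr true else Sum.inr false
     let ua : Fin k → ℕ → α ⊕ Bool := fun j i =>
       if i < n then Sum.inl (s j i) else a j (i - n)
     let ub : Fin k → ℕ → α ⊕ Bool := fun j i =>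
       if i < n then Sum.inl (s j i) else b j (i - n)
     ((∃ stil : ℕ → α ⊕ Bool,
         (∀ j, hamDist (n + 2 * X) (ua j) stil ≤ d ∧
               hamDist (n + 2 * X) (ub j) stil ≤ d) ∧
         (∑ j, hamDist (n + 2 * X) (ua j) stil) +
           (∑ j, hamDist (n + 2 * X) (ub j) stil) ≤ 2 * D) ↔
      (∃ sstar : ℕ → α ⊕ Bool,
         (∀ j, hamDist n sstar (fun i => Sum.inl (s j i)) + x j ≤ d) ∧
         (∑ j, hamDist n sstar (fun i => Sum.inl (s j i))) + (∑ j, x j) ≤ D))) := by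
  intro X a b ua ub
  have hX (j) : x j ≤ X := Finset.le_sup (Finset.mem_univ j)
  have hua (j t) : hamDist (n + 2 * X) (ua j) t = hamDist n t (fun i => Sum.inl (s j i)) +
      hamDist (2 * X) (parityGadget α (x j) 1) (fun i => t (n + i)) :=
    hamDist_append n (2 * X) (fun i => Sum.inl (s j i)) (parityGadget α (x j) 1) t
  have hub (j t) : hamDist (n + 2 * X) (ub j) t = hamDist n t (fun i => Sum.inl (s j i)) +
      hamDist (2 * X) (parityGadget α (x j) 0) (fun i => t (n + i)) :=
    hamDist_append n (2 * X) (fun i => Sum.inl (s j i)) (parityGadget α (x j) 0) t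
  constructor
  · rintro ⟨t, hd, hD⟩
    have key (j) : 2 * (hamDist n t (fun i => Sum.inl (s j i)) + x j) ≤
        hamDist (n + 2 * X) (ua j) t + hamDist (n + 2 * X) (ub j) t := by
      have := hamDist_triangle_left (2 * X) (parityGadget α (x j) 1) (parityGadget α (x j) 0)
        (fun i => t (n + i))
      rw [hamDist_parityGadget_one_zero, min_eq_right (hX j)] at this
      rw [hua, hub]
      lia
    refine ⟨t, fun j => ?_, ?_⟩
    · have := key j
      have := hd j
      lia
    · have := Finset.sum_le_sum fun j (_ : j ∈ Finset.univ) => key j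
      rw [← Finset.mul_sum, Finset.sum_add_distrib, Finset.sum_add_distrib] at this
      lia
  · rintro ⟨t, hd, hD⟩
    let t₀ : ℕ → α ⊕ Bool := fun i => if i < n then t i else Sum.inr false
    have head (j) : hamDist n t₀ (fun i => Sum.inl (s j i)) =
        hamDist n t (fun i => Sum.inl (s j i)) :=
      hamDist_congr (fun i hi => if_pos hi) fun _ _ => rfl
    have tail (j r) (hr : r < 2) :
        hamDist (2 * X) (parityGadget α (x j) r) (fun i => t₀ (n + i)) = x j := by
      have ht₀ : (fun i => t₀ (n + i)) = fun _ => Sum.inr false := by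
        funext i
        simp [t₀]
      rw [ht₀, hamDist_parityGadget_zero _ _ _ hr, min_eq_right (hX j)]
    refine ⟨t₀, fun j => ?_, ?_⟩
    · rw [hua, hub, head, tail j 1 (by simp), tail j 0 (by simp)]
      exact ⟨hd j, hd j⟩
    · simp only [hua, hub, head, tail _ 1 one_lt_two, tail _ 0 two_pos, Finset.sum_add_distrib]
      lia
end
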